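/- Let f be the density of a nondegenerate Gaussian distribution on ℝ^d with mean ν and positive-definite covariance matrix Σ, and let λ_min be the smallest eigenvalue of Σ. Then for every R > 0, every r ∈ (0,R] and every x ∈ ℝ^d, ∫_{B(x,r)} f(z) dz ≥ f(x) e^{−R²/(2λ_min)} r^d V_d; equivalently, m_f(x,R) ≥ e^{−R²/(2λ_min)} f(x) for all x ∈ ℝ^d. -/

import Mathlib

open MeasureTheory ENNReal Set Filter ProbabilityTheory Matrix

noncomputable section

/-- `ℝ^d` with the Euclidean distance. -/
abbrev Euc (d : ℕ) := EuclideanSpace ℝ (Fin d)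

/-- The volume `V_d = π^(d/2) / Γ(d/2 + 1)` of the unit ball in `ℝ^d`. -/
def Vd (d : ℕ) : ℝ := Real.pi ^ ((d : ℝ) / 2) / Real.Gamma ((d : ℝ) / 2 + 1)

/-- `f` is a probability density on `ℝ^d` (w.r.t. Lebesgue measure). -/
def IsProbDensity {d : ℕ} (f : Euc d → ℝ) : Prop :=
  Measurable f ∧ (∀ x, 0 ≤ f x) ∧ ∫ x, f x = 1

/-- `G(t) = 0` for `t < 1` and `G(t) = t log t` for `t ≥ 1`. -/
def Gfun (t : ℝ) : ℝ := if t < 1 then 0 else t * Real.log t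

/-- `I_f(x,r) = (∫_{B(x,r)} f) / (r^d V_d)`. -/
def If {d : ℕ} (f : Euc d → ℝ) (x : Euc d) (r : ℝ) : ℝ :=
  (∫ y in Metric.closedBall x r, f y) / (r ^ d * Vd d)

/-- `M_f(x,R) = sup_{r ∈ (0,R]} I_f(x,r)` (with values in `[0,∞]`). -/
def Mf {d : ℕ} (f : Euc d → ℝ) (x : Euc d) (R : ℝ) : ℝ≥0∞ :=
  ⨆ r ∈ Ioc (0 : ℝ) R, ENNReal.ofReal (If f x r)

/-- `m_f(x,R) = inf_{r ∈ (0,R]} I_f(x,r)`. -/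
def mf {d : ℕ} (f : Euc d → ℝ) (x : Euc d) (R : ℝ) : ℝ≥0∞ :=
  ⨅ r ∈ Ioc (0 : ℝ) R, ENNReal.ofReal (If f x r)

/-- `K_f(ε) = ∫ (∫ G(|log ρ(x,y)|) f(y) dy)^{1+ε} f(x) dx`, with values in `[0,∞]`. -/
def Kf {d : ℕ} (f : Euc d → ℝ) (ε : ℝ) : ℝ≥0∞ :=
  ∫⁻ x, (∫⁻ y, ENNReal.ofReal (Gfun |Real.log (dist x y)|) * ENNReal.ofReal (f y)) ^ (1 + ε)
      * ENNReal.ofReal (f x)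

/-- `K_{f,2}(ε) = ∫ (∫ G(log² ρ(x,y)) f(y) dy)^{1+ε} f(x) dx`. -/
def Kf2 {d : ℕ} (f : Euc d → ℝ) (ε : ℝ) : ℝ≥0∞ :=
  ∫⁻ x, (∫⁻ y, ENNReal.ofReal (Gfun ((Real.log (dist x y)) ^ 2)) * ENNReal.ofReal (f y)) ^ (1 + ε)
      * ENNReal.ofReal (f x)

/-- `Q_f(ε,R) = ∫ M_f(x,R)^ε f(x) dx`. -/
def Qf {d : ℕ} (f : Euc d → ℝ) (ε R : ℝ) : ℝ≥0∞ :=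
  ∫⁻ x, (Mf f x R) ^ ε * ENNReal.ofReal (f x)

/-- `T_f(ε,R) = ∫ m_f(x,R)^{-ε} f(x) dx` (with `0^{-ε} = ∞`). -/
def Tf {d : ℕ} (f : Euc d → ℝ) (ε R : ℝ) : ℝ≥0∞ :=
  ∫⁻ x, (mf f x R) ^ (-ε) * ENNReal.ofReal (f x)

/-- The differential Shannon entropy `H(f) = -∫ f log f`. -/
def entropy {d : ℕ} (f : Euc d → ℝ) : ℝ := -∫ x, f x * Real.log (f x)

/-- The Euler–Mascheroni constant `γ = -∫_0^∞ e^{-t} log t dt`. -/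
def eulerGamma : ℝ := -∫ t in Ioi (0 : ℝ), Real.exp (-t) * Real.log t

/-- `ρ_i`: the nearest-neighbour distance of `X i` within the sample `X 0, …, X (N-1)`. -/
def nnDist {d : ℕ} {Ω : Type*} (X : ℕ → Ω → Euc d) (N i : ℕ) (ω : Ω) : ℝ :=
  sInf {r : ℝ | ∃ j, j < N ∧ j ≠ i ∧ r = dist (X i ω) (X j ω)}

/-- The Kozachenko–Leonenko estimate
`H_N = (d/N) Σ_{i<N} log ρ_i + log V_d + γ + log (N-1)`. -/
def KLest {d : ℕ} {Ω : Type*} (X : ℕ → Ω → Euc d) (N : ℕ) (ω : Ω) : ℝ :=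
  ((d : ℝ) / N) * ∑ i ∈ Finset.range N, Real.log (nnDist X N i ω)
    + Real.log (Vd d) + eulerGamma + Real.log ((N : ℝ) - 1)

/-- The density of a nondegenerate Gaussian vector with mean `ν` and covariance `S`. -/
def gaussDensity {d : ℕ} (ν : Euc d) (S : Matrix (Fin d) (Fin d) ℝ) (x : Euc d) : ℝ :=
  (2 * Real.pi) ^ (-(d : ℝ) / 2) * S.det ^ (-(1 : ℝ) / 2) *
    Real.exp (-(1 / 2) * (S⁻¹.mulVec (fun i => x i - ν i) ⬝ᵥ fun i => x i - ν i))

end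

/-!
Reflecting the ball `B(x, r)` through its centre shows that `2 ∫_{B(x,r)} f` is the integral over
the ball of `f (x + y) + f (x - y)`, `y = z - x`. For a Gaussian density, convexity of `exp` and
the parallelogram law for the form `y ↦ (S⁻¹ y, y)` bound this sum below by
`2 f(x) exp (-(S⁻¹ y, y) / 2)`, and `(S⁻¹ y, y) ≤ ‖y‖² / λ_min ≤ R² / λ_min`.
-/

section Reflection

variable {G : Type*} [AddGroup G] [MeasurableSpace G] [MeasurableAdd G] [MeasurableNeg G]
  {μ : Measure G} [μ.IsNegInvariant] [μ.IsAddLeftInvariant] {s : Set G} {a : G}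

lemma setIntegral_sub_left_of_preimage_eq {E : Type*} [NormedAddCommGroup E] [NormedSpace ℝ E]
    (hs : (a - ·) ⁻¹' s = s) (f : G → E) : ∫ z in s, f (a - z) ∂μ = ∫ z in s, f z ∂μ := by
  have h := (Measure.measurePreserving_sub_left μ a).setIntegral_preimage_emb
    (MeasurableEquiv.subLeft a).measurableEmbedding f s
  rwa [hs] at h

lemma integrableOn_sub_left_of_preimage_eq {E : Type*} [NormedAddCommGroup E]
    (hs : (a - ·) ⁻¹' s = s) {f : G → E} (hf : IntegrableOn f s μ) :
    IntegrableOn (fun z ↦ f (a - z)) s μ := by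
  have h := ((Measure.measurePreserving_sub_left μ a).integrableOn_comp_preimage
    (MeasurableEquiv.subLeft a).measurableEmbedding).2 hf
  rwa [hs] at h

lemma mul_measureReal_le_setIntegral_of_two_mul_le_add_sub_left {f : G → ℝ} {c : ℝ}
    (hs : MeasurableSet s) (hμs : μ s ≠ ∞) (hsymm : (a - ·) ⁻¹' s = s) (hf : IntegrableOn f s μ)
    (hc : ∀ z ∈ s, 2 * c ≤ f z + f (a - z)) : c * μ.real s ≤ ∫ z in s, f z ∂μ := by
  have hf' := integrableOn_sub_left_of_preimage_eq hsymm hf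
  have : 2 * c * μ.real s ≤ 2 * ∫ z in s, f z ∂μ :=
    calc 2 * c * μ.real s ≤ ∫ z in s, (f z + f (a - z)) ∂μ :=
          setIntegral_ge_of_const_le_real hs hμs hc (hf.add hf')
      _ = (∫ z in s, f z ∂μ) + ∫ z in s, f (a - z) ∂μ := integral_add hf hf'
      _ = 2 * ∫ z in s, f z ∂μ := by
          rw [setIntegral_sub_left_of_preimage_eq hsymm, two_mul]
  linarith

end Reflection

lemma preimage_two_nsmul_sub_closedBall {E : Type*} [SeminormedAddCommGroup E] (x : E) (r : ℝ) :
    (2 • x - ·) ⁻¹' Metric.closedBall x r = Metric.closedBall x r := by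
  ext z
  have : 2 • x - z - x = x - z := by abel
  rw [mem_preimage, mem_closedBall_iff_norm, this, mem_closedBall_iff_norm']

section QuadraticForm

variable {n : Type*} [Fintype n]

lemma mulVec_dotProduct_parallelogram {α : Type*} [NonUnitalNonAssocRing α] (A : Matrix n n α)
    (u v : n → α) :
    A *ᵥ (u + v) ⬝ᵥ (u + v) + A *ᵥ (u - v) ⬝ᵥ (u - v)
      = 2 • (A *ᵥ u ⬝ᵥ u) + 2 • (A *ᵥ v ⬝ᵥ v) := by
  simp only [mulVec_add, mulVec_sub, add_dotProduct, sub_dotProduct, dotProduct_add,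
    dotProduct_sub]
  abel

variable [DecidableEq n]

open scoped ComplexOrder in
lemma iInf_eigenvalues_pos {𝕜 : Type*} [RCLike 𝕜] [Nonempty n] {A : Matrix n n 𝕜}
    (hA : A.PosDef) : 0 < ⨅ i, hA.1.eigenvalues i := by
  obtain ⟨i, hi⟩ := exists_eq_ciInf_of_finite (f := hA.1.eigenvalues)
  exact hi ▸ hA.eigenvalues_pos i

open scoped MatrixOrder ComplexOrder in
lemma inv_le_algebraMap_inv_iInf_eigenvalues {𝕜 : Type*} [RCLike 𝕜] {A : Matrix n n 𝕜}
    (hA : A.PosDef) : A⁻¹ ≤ algebraMap ℝ _ (⨅ i, hA.1.eigenvalues i)⁻¹ := by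
  rw [le_algebraMap_iff_spectrum_le hA.inv.1]
  intro t ht
  obtain ⟨U, rfl⟩ := hA.isUnit
  have hinv : t⁻¹ ∈ spectrum ℝ (U : Matrix n n 𝕜) := by
    rwa [spectrum.inv₀_mem_iff, coe_units_inv]
  obtain ⟨i, hi⟩ := hA.1.spectrum_real_eq_range_eigenvalues ▸ hinv
  have : Nonempty n := ⟨i⟩
  refine le_inv_of_le_inv₀ (iInf_eigenvalues_pos hA) ?_
  exact hi ▸ ciInf_le (finite_range _).bddBelow i

open scoped MatrixOrder in
lemma inv_mulVec_dotProduct_le_norm_sq_div {A : Matrix n n ℝ} (hA : A.PosDef)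
    (y : EuclideanSpace ℝ n) :
    A⁻¹ *ᵥ y ⬝ᵥ y ≤ ‖y‖ ^ 2 / ⨅ i, hA.1.eigenvalues i := by
  have h := (le_iff.1 (inv_le_algebraMap_inv_iInf_eigenvalues hA)).dotProduct_mulVec_nonneg y
  have hy : ‖y‖ ^ 2 = y ⬝ᵥ y := by
    rw [EuclideanSpace.real_norm_sq_eq]
    simp only [dotProduct, sq]
  rw [Algebra.algebraMap_eq_smul_one, sub_mulVec, smul_mulVec, one_mulVec, dotProduct_sub,
    dotProduct_smul, star_trivial, sub_nonneg, smul_eq_mul] at h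
  rwa [hy, dotProduct_comm, div_eq_inv_mul]

end QuadraticForm

lemma two_mul_exp_half_add_le (s t : ℝ) :
    2 * Real.exp ((s + t) / 2) ≤ Real.exp s + Real.exp t :=
  calc 2 * Real.exp ((s + t) / 2) = 2 * Real.exp (s / 2) * Real.exp (t / 2) := by
        rw [add_div, Real.exp_add, mul_assoc]
    _ ≤ Real.exp (s / 2) ^ 2 + Real.exp (t / 2) ^ 2 := two_mul_le_add_sq _ _
    _ = Real.exp s + Real.exp t := by
        rw [← Real.exp_nat_mul, ← Real.exp_nat_mul, Nat.cast_ofNat,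
          mul_div_cancel₀ s two_ne_zero, mul_div_cancel₀ t two_ne_zero]

section BallAverage

variable {d : ℕ}

lemma Vd_pos (d : ℕ) : 0 < Vd d :=
  div_pos (Real.rpow_pos_of_pos Real.pi_pos _) (Real.Gamma_pos_of_pos (by positivity))

lemma volume_real_closedBall_eq (hd : 0 < d) (x : Euc d) {r : ℝ} (hr : 0 ≤ r) :
    volume.real (Metric.closedBall x r) = r ^ d * Vd d := by
  have : Nonempty (Fin d) := ⟨⟨0, hd⟩⟩
  have hVd : √Real.pi ^ d / Real.Gamma ((d : ℝ) / 2 + 1) = Vd d := by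
    rw [Vd, Real.rpow_div_two_eq_sqrt _ Real.pi_pos.le, Real.rpow_natCast]
  rw [measureReal_def, EuclideanSpace.volume_closedBall, Fintype.card_fin, hVd, toReal_mul,
    toReal_pow, toReal_ofReal hr, toReal_ofReal (Vd_pos d).le]

lemma ofReal_le_mf {f : Euc d → ℝ} {x : Euc d} {R c : ℝ}
    (h : ∀ r ∈ Ioc 0 R, c * (r ^ d * Vd d) ≤ ∫ z in Metric.closedBall x r, f z) :
    ENNReal.ofReal c ≤ mf f x R :=
  le_iInf₂ fun r hr ↦ ofReal_le_ofReal <|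
    (le_div_iff₀ (mul_pos (pow_pos hr.1 d) (Vd_pos d))).2 (h r hr)

end BallAverage

section GaussDensity

variable {d : ℕ} {S : Matrix (Fin d) (Fin d) ℝ}

lemma continuous_gaussDensity (ν : Euc d) (S : Matrix (Fin d) (Fin d) ℝ) :
    Continuous (gaussDensity ν S) := by
  unfold gaussDensity
  simp only [mulVec, dotProduct]
  fun_prop

lemma gaussDensity_nonneg (hS : 0 ≤ S.det) (ν x : Euc d) : 0 ≤ gaussDensity ν S x :=
  mul_nonneg (mul_nonneg (by positivity) (Real.rpow_nonneg hS _)) (Real.exp_nonneg _)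

lemma two_mul_gaussDensity_mul_exp_le_add_sub (hS : 0 ≤ S.det) (ν x y : Euc d) :
    2 * (gaussDensity ν S x * Real.exp (-(1 / 2) * (S⁻¹ *ᵥ y ⬝ᵥ y)))
      ≤ gaussDensity ν S (x + y) + gaussDensity ν S (x - y) := by
  let Q (v : Euc d) : ℝ := S⁻¹ *ᵥ v ⬝ᵥ v
  let C : ℝ := (2 * Real.pi) ^ (-(d : ℝ) / 2) * S.det ^ (-(1 : ℝ) / 2)
  have gaussDensity_eq (z : Euc d) : gaussDensity ν S z = C * Real.exp (-(1 / 2) * Q (z - ν)) := rfl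
  have hC : 0 ≤ C := mul_nonneg (by positivity) (Real.rpow_nonneg hS _)
  have parallelogram : Q (x - ν + y) + Q (x - ν - y) = 2 • Q (x - ν) + 2 • Q y :=
    mulVec_dotProduct_parallelogram S⁻¹ (x - ν).ofLp y.ofLp
  calc 2 * (gaussDensity ν S x * Real.exp (-(1 / 2) * Q y))
      = C * (2 * Real.exp ((-(1 / 2) * Q (x - ν + y) + -(1 / 2) * Q (x - ν - y)) / 2)) := by
        rw [gaussDensity_eq, ← mul_add, parallelogram, mul_assoc, ← Real.exp_add]
        ring_nf
    _ ≤ C * (Real.exp (-(1 / 2) * Q (x - ν + y)) + Real.exp (-(1 / 2) * Q (x - ν - y))) :=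
        mul_le_mul_of_nonneg_left (two_mul_exp_half_add_le _ _) hC
    _ = gaussDensity ν S (x + y) + gaussDensity ν S (x - y) := by
        rw [mul_add, gaussDensity_eq, gaussDensity_eq, add_sub_right_comm, sub_right_comm]

lemma two_mul_gaussDensity_mul_exp_norm_sq_le_add_sub (hS : S.PosDef) (ν x y : Euc d) :
    2 * (gaussDensity ν S x * Real.exp (-‖y‖ ^ 2 / (2 * ⨅ i, hS.1.eigenvalues i)))
      ≤ gaussDensity ν S (x + y) + gaussDensity ν S (x - y) := by
  have hdet := hS.det_pos.le
  refine le_trans ?_ (two_mul_gaussDensity_mul_exp_le_add_sub hdet ν x y)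
  have hexp : -‖y‖ ^ 2 / (2 * ⨅ i, hS.1.eigenvalues i) ≤ -(1 / 2) * (S⁻¹ *ᵥ y ⬝ᵥ y) :=
    calc -‖y‖ ^ 2 / (2 * ⨅ i, hS.1.eigenvalues i)
        = -(1 / 2) * (‖y‖ ^ 2 / ⨅ i, hS.1.eigenvalues i) := by ring
      _ ≤ -(1 / 2) * (S⁻¹ *ᵥ y ⬝ᵥ y) :=
        mul_le_mul_of_nonpos_left (inv_mulVec_dotProduct_le_norm_sq_div hS y) (by norm_num)
  gcongr
  exact gaussDensity_nonneg hdet ν x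

lemma gaussDensity_mul_exp_mul_measureReal_le_setIntegral (hS : S.PosDef) (ν x : Euc d) {r R : ℝ}
    (hrR : r ≤ R) :
    gaussDensity ν S x * Real.exp (-R ^ 2 / (2 * ⨅ i, hS.1.eigenvalues i))
        * volume.real (Metric.closedBall x r)
      ≤ ∫ z in Metric.closedBall x r, gaussDensity ν S z := by
  refine mul_measureReal_le_setIntegral_of_two_mul_le_add_sub_left
    Metric.isClosed_closedBall.measurableSet measure_closedBall_lt_top.ne
    (preimage_two_nsmul_sub_closedBall x r)
    ((continuous_gaussDensity ν S).continuousOn.integrableOn_compact (isCompact_closedBall x r))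
    fun z hz ↦ ?_
  have hzR : ‖z - x‖ ≤ R := (mem_closedBall_iff_norm.1 hz).trans hrR
  have hpair := two_mul_gaussDensity_mul_exp_norm_sq_le_add_sub hS ν x (z - x)
  have hreflect : x - (z - x) = 2 • x - z := by rw [two_nsmul]; abel
  rw [add_sub_cancel, hreflect] at hpair
  refine le_trans ?_ hpair
  have hnonneg := gaussDensity_nonneg hS.det_pos.le ν x
  have hmin : 0 ≤ ⨅ i, hS.1.eigenvalues i := Real.iInf_nonneg fun i ↦ (hS.eigenvalues_pos i).le
  gcongr

end GaussDensity

/-- For a nondegenerate Gaussian density `f` with covariance `S` and smallest eigenvalue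
`λ_min`, one has `∫_{B(x,r)} f ≥ f(x) e^{-R²/(2λ_min)} r^d V_d` for all `0 < r ≤ R`;
equivalently `m_f(x,R) ≥ e^{-R²/(2λ_min)} f(x)` for all `x`. -/
theorem gaussian_density_condition {d : ℕ} (hd : 0 < d) (ν : Euc d)
    (S : Matrix (Fin d) (Fin d) ℝ) (hS : S.PosDef) {R : ℝ} (hR : 0 < R) :
    (∀ r ∈ Ioc (0 : ℝ) R, ∀ x : Euc d,
        gaussDensity ν S x * Real.exp (-(R ^ 2) / (2 * ⨅ i, hS.1.eigenvalues i))
            * (r ^ d * Vd d)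
          ≤ ∫ z in Metric.closedBall x r, gaussDensity ν S z)
    ∧ ∀ x : Euc d,
        ENNReal.ofReal (Real.exp (-(R ^ 2) / (2 * ⨅ i, hS.1.eigenvalues i))
            * gaussDensity ν S x)
          ≤ mf (gaussDensity ν S) x R := by
  have hball (x : Euc d) (r : ℝ) (hr : r ∈ Ioc 0 R) :
      gaussDensity ν S x * Real.exp (-(R ^ 2) / (2 * ⨅ i, hS.1.eigenvalues i)) * (r ^ d * Vd d)
        ≤ ∫ z in Metric.closedBall x r, gaussDensity ν S z := by
    rw [← volume_real_closedBall_eq hd x hr.1.le]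
    exact gaussDensity_mul_exp_mul_measureReal_le_setIntegral hS ν x hr.2
  refine ⟨fun r hr x ↦ hball x r hr, fun x ↦ ?_⟩
  rw [mul_comm]
  exact ofReal_le_mf (hball x)
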